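/- Let K be a field, let A = K[[t₁,...,tₙ]]/I be a quotient of a formal power series ring, a complete noetherian local ring with maximal ideal m, and let I(A) be an injective hull of A/m as an A-module. Then the functor M ↦ Hom_A(M, I(A)) gives an anti-equivalence between the category of finitely generated A-modules and the category of artinian A-modules. -/

import Mathlib

open IsLocalRing

namespace Module.Baer

variable {R E M N : Type*} [CommRing R] [AddCommGroup E] [Module R E]
  [AddCommGroup M] [Module R M] [AddCommGroup N] [Module R N]

/-- A map into an injective module factors through any map with smaller kernel. -/
lemma exists_comp_eq_of_ker_le (hE : Module.Baer R E) (β : M →ₗ[R] N) (ψ : M →ₗ[R] E)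
    (h : LinearMap.ker β ≤ LinearMap.ker ψ) : ∃ g : N →ₗ[R] E, g ∘ₗ β = ψ := by
  obtain ⟨g, hg⟩ := hE.extension_property ((LinearMap.ker β).liftQ β le_rfl)
    (LinearMap.ker_eq_bot.mp (Submodule.ker_liftQ_eq_bot _ _ _ le_rfl))
    ((LinearMap.ker β).liftQ ψ h)
  refine ⟨g, LinearMap.ext fun x ↦ ?_⟩
  simpa using LinearMap.congr_fun hg (Submodule.Quotient.mk x)

variable [IsLocalRing R]

/-- An injective module containing the residue field is a cogenerator. -/
lemma exists_apply_ne_zero (hE : Module.Baer R E) {e : (R ⧸ maximalIdeal R) →ₗ[R] E}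
    (he : Function.Injective e) {x : M} (hx : x ≠ 0) : ∃ φ : M →ₗ[R] E, φ x ≠ 0 := by
  obtain ⟨φ, hφ⟩ := hE.exists_comp_eq_of_ker_le (LinearMap.toSpanSingleton R M x)
    (e ∘ₗ (maximalIdeal R).mkQ) fun r hr ↦ by
      have hr' : r ∈ maximalIdeal R := by
        rw [mem_maximalIdeal, mem_nonunits_iff]
        exact fun hu ↦ hx (hu.smul_eq_zero.mp (by simpa using hr))
      rw [LinearMap.mem_ker, LinearMap.comp_apply, Submodule.mkQ_apply,
        (Submodule.Quotient.mk_eq_zero _).mpr hr', map_zero]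
  refine ⟨φ, fun h0 ↦ ?_⟩
  have h1 := LinearMap.congr_fun hφ 1
  simp only [LinearMap.comp_apply, LinearMap.toSpanSingleton_apply, one_smul, h0] at h1
  have h2 := (Submodule.Quotient.mk_eq_zero _).mp (he (h1.symm.trans e.map_zero.symm))
  exact (Ideal.ne_top_iff_one _).mp (maximalIdeal.isMaximal R).ne_top h2

/-- A point outside a submodule is separated from it by a functional. -/
lemma exists_le_ker_apply_ne_zero (hE : Module.Baer R E)
    {e : (R ⧸ maximalIdeal R) →ₗ[R] E} (he : Function.Injective e) {S : Submodule R M} {x : M}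
    (hx : x ∉ S) : ∃ φ : M →ₗ[R] E, S ≤ LinearMap.ker φ ∧ φ x ≠ 0 := by
  obtain ⟨φ, hφ⟩ := hE.exists_apply_ne_zero he
    (x := S.mkQ x) (by simpa [Submodule.Quotient.mk_eq_zero] using hx)
  refine ⟨φ ∘ₗ S.mkQ, fun y hy ↦ ?_, hφ⟩
  simp [(Submodule.Quotient.mk_eq_zero S).mpr hy]

end Module.Baer

namespace Matlis

variable {R E P : Type*} [CommRing R] [AddCommGroup E] [Module R E] [AddCommGroup P] [Module R P]

section IsLocalRing

variable [IsLocalRing R]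

/-- In an essential extension of the residue field, the socle is the residue field. -/
lemma mem_range_of_forall_smul_eq_zero {e : (R ⧸ maximalIdeal R) →ₗ[R] E}
    (hess : ∀ N : Submodule R E, N ≠ ⊥ → ∃ y : E, y ≠ 0 ∧ y ∈ N ∧ y ∈ LinearMap.range e)
    {x : E} (hx : ∀ r ∈ maximalIdeal R, r • x = 0) : x ∈ LinearMap.range e := by
  by_cases h0 : x = 0
  · exact h0 ▸ zero_mem _
  obtain ⟨y, hy0, hyx, hye⟩ := hess (R ∙ x) (by simpa using h0)
  obtain ⟨r, rfl⟩ := Submodule.mem_span_singleton.mp hyx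
  have hr : IsUnit r := by
    by_contra hr
    exact hy0 (hx r ((mem_maximalIdeal r).mpr hr))
  obtain ⟨u, rfl⟩ := hr
  simpa [Units.smul_def, smul_smul] using Submodule.smul_mem _ (↑u⁻¹ : R) hye

/-- An element of an injective hull of the residue field is annihilated by a power of the
maximal ideal. -/
lemma exists_pow_smul_eq_zero [IsNoetherianRing R] {e : (R ⧸ maximalIdeal R) →ₗ[R] E}
    (hess : ∀ N : Submodule R E, N ≠ ⊥ → ∃ y : E, y ≠ 0 ∧ y ∈ N ∧ y ∈ LinearMap.range e)
    (x : E) : ∃ n : ℕ, ∀ r ∈ maximalIdeal R ^ n, r • x = 0 := by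
  by_cases h1 : e (Submodule.Quotient.mk 1) = 0
  · have hx : x = 0 := by
      by_contra hx
      obtain ⟨y, hy0, -, z, rfl⟩ := hess (R ∙ x) (by simpa using hx)
      obtain ⟨r, rfl⟩ := Submodule.Quotient.mk_surjective _ z
      apply hy0
      rw [← mul_one r, ← smul_eq_mul, Submodule.Quotient.mk_smul, map_smul, h1, smul_zero]
    exact ⟨0, by simp [hx]⟩
  -- Otherwise a generator of the socle escapes `m ^ n x` for some `n`, by Krull's theorem.
  obtain ⟨n, hn⟩ : ∃ n : ℕ, e (Submodule.Quotient.mk 1) ∉ maximalIdeal R ^ n • (R ∙ x) := by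
    by_contra! hall
    have hmem : e (Submodule.Quotient.mk 1) ∈ R ∙ x := Submodule.smul_le_right (hall 0)
    have hK := Ideal.iInf_pow_smul_eq_bot_of_isLocalRing (M := (R ∙ x : Submodule R E))
      (maximalIdeal R) (maximalIdeal.isMaximal R).ne_top
    have : (⟨_, hmem⟩ : (R ∙ x : Submodule R E)) ∈
        (⨅ i : ℕ, maximalIdeal R ^ i • ⊤ : Submodule R (R ∙ x : Submodule R E)) := by
      rw [Submodule.mem_iInf]
      intro i
      have hi := hall i
      rw [← Submodule.range_subtype (R ∙ x), ← Submodule.map_top, ← Submodule.map_smul''] at hi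
      obtain ⟨w, hw, hwx⟩ := hi
      rwa [← show w = ⟨_, hmem⟩ from Subtype.ext hwx]
    rw [hK, Submodule.mem_bot] at this
    exact h1 (congrArg Subtype.val this)
  refine ⟨n, fun r hr ↦ ?_⟩
  suffices h : maximalIdeal R ^ n • (R ∙ x) = ⊥ by
    have := Submodule.smul_mem_smul hr (Submodule.mem_span_singleton_self x)
    rwa [h, Submodule.mem_bot] at this
  by_contra hne
  obtain ⟨y, hy0, hyx, z, rfl⟩ := hess _ hne
  obtain ⟨s, rfl⟩ := Submodule.Quotient.mk_surjective _ z
  have hs : IsUnit s := by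
    by_contra hs
    apply hy0
    rw [(Submodule.Quotient.mk_eq_zero _).mpr ((mem_maximalIdeal s).mpr hs), map_zero]
  obtain ⟨u, rfl⟩ := hs
  apply hn
  have := Submodule.smul_mem _ (↑u⁻¹ : R) hyx
  rwa [← map_smul, ← Submodule.Quotient.mk_smul, smul_eq_mul, Units.inv_mul] at this

/-- An endomorphism of an injective hull of the residue field acts on the socle as a scalar. -/
lemma exists_smul_eq_of_socle {e : (R ⧸ maximalIdeal R) →ₗ[R] E}
    (hess : ∀ N : Submodule R E, N ≠ ⊥ → ∃ y : E, y ≠ 0 ∧ y ∈ N ∧ y ∈ LinearMap.range e)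
    (g : E →ₗ[R] E) :
    ∃ c : R, ∀ x : E, (∀ r ∈ maximalIdeal R, r • x = 0) → g x = c • x := by
  have hkill : ∀ z : R ⧸ maximalIdeal R, ∀ r ∈ maximalIdeal R, r • z = 0 := by
    intro z r hr
    obtain ⟨s, rfl⟩ := Submodule.Quotient.mk_surjective _ z
    rw [← Submodule.Quotient.mk_smul, Submodule.Quotient.mk_eq_zero]
    exact Ideal.mul_mem_right _ _ hr
  obtain ⟨z, hz⟩ := mem_range_of_forall_smul_eq_zero hess
    (x := g (e (Submodule.Quotient.mk 1))) fun r hr ↦ by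
      rw [← map_smul, ← map_smul, hkill _ r hr, map_zero, map_zero]
  obtain ⟨c, rfl⟩ := Submodule.Quotient.mk_surjective _ z
  refine ⟨c, fun x hx ↦ ?_⟩
  obtain ⟨w, rfl⟩ := mem_range_of_forall_smul_eq_zero hess hx
  obtain ⟨s, rfl⟩ := Submodule.Quotient.mk_surjective _ w
  have hs : ∀ t : R, (Submodule.Quotient.mk t : R ⧸ maximalIdeal R) =
      t • Submodule.Quotient.mk 1 := fun t ↦ by
    rw [← Submodule.Quotient.mk_smul, smul_eq_mul, mul_one]
  rw [hs s, map_smul, map_smul, ← hz, hs c, map_smul, smul_comm]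

/-- An endomorphism vanishing on the `m ^ n`-torsion acts on the `m ^ (n + 1)`-torsion as an
element of `m ^ n`. -/
lemma exists_mem_pow_smul_eq [IsNoetherianRing R] (hE : Module.Baer R E)
    {e : (R ⧸ maximalIdeal R) →ₗ[R] E}
    (hess : ∀ N : Submodule R E, N ≠ ⊥ → ∃ y : E, y ≠ 0 ∧ y ∈ N ∧ y ∈ LinearMap.range e)
    {n : ℕ} {ψ : E →ₗ[R] E}
    (hψ : ∀ x : E, (∀ r ∈ maximalIdeal R ^ n, r • x = 0) → ψ x = 0) :
    ∃ d ∈ maximalIdeal R ^ n,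
      ∀ x : E, (∀ r ∈ maximalIdeal R ^ (n + 1), r • x = 0) → ψ x = d • x := by
  classical
  obtain ⟨s, hs⟩ := (isNoetherianRing_iff_ideal_fg R).mp ‹_› (maximalIdeal R ^ n)
  have hsm : ∀ b : s, (b : R) ∈ maximalIdeal R ^ n := fun b ↦ hs ▸ Submodule.subset_span b.2
  obtain ⟨g, hg⟩ := hE.exists_comp_eq_of_ker_le
    (LinearMap.pi fun b : s ↦ LinearMap.lsmul R E (b : R)) ψ fun x hx ↦ by
      refine hψ x fun r hr ↦ ?_
      rw [← hs] at hr
      have hle : Ideal.span (s : Set R) ≤ LinearMap.ker (LinearMap.toSpanSingleton R E x) := by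
        refine Ideal.span_le.mpr fun b hb ↦ ?_
        simpa using congrFun (LinearMap.mem_ker.mp hx) ⟨b, hb⟩
      simpa using hle hr
  choose c hc using fun b : s ↦
    exists_smul_eq_of_socle hess (g ∘ₗ LinearMap.single R (fun _ : s ↦ E) b)
  refine ⟨∑ b : s, c b * b, Ideal.sum_mem _ fun b _ ↦ Ideal.mul_mem_left _ _ (hsm b),
    fun x hx ↦ ?_⟩
  have hbx : ∀ b : s, ∀ r ∈ maximalIdeal R, r • (b : R) • x = 0 := fun b r hr ↦ by
    rw [smul_smul]
    exact hx _ (pow_succ' (maximalIdeal R) n ▸ Ideal.mul_mem_mul hr (hsm b))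
  rw [← hg, Finset.sum_smul, LinearMap.comp_apply, ← LinearMap.sum_single_apply _
    (LinearMap.pi (fun b : s ↦ LinearMap.lsmul R E (b : R)) x), map_sum]
  refine Finset.sum_congr rfl fun b _ ↦ ?_
  rw [mul_smul]
  exact hc b _ (hbx b)

/-- Over a complete noetherian local ring, every endomorphism of an injective hull of the residue
field is a homothety. -/
theorem exists_forall_apply_eq_smul [IsNoetherianRing R] [IsPrecomplete (maximalIdeal R) R]
    (hE : Module.Baer R E) {e : (R ⧸ maximalIdeal R) →ₗ[R] E}
    (hess : ∀ N : Submodule R E, N ≠ ⊥ → ∃ y : E, y ≠ 0 ∧ y ∈ N ∧ y ∈ LinearMap.range e)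
    (ψ : E →ₗ[R] E) : ∃ a : R, ∀ x, ψ x = a • x := by
  have step : ∀ n (a : R), ∃ b : R,
      (∀ x : E, (∀ r ∈ maximalIdeal R ^ n, r • x = 0) → ψ x = a • x) →
      b - a ∈ maximalIdeal R ^ n ∧
      ∀ x : E, (∀ r ∈ maximalIdeal R ^ (n + 1), r • x = 0) → ψ x = b • x := by
    intro n a
    by_cases h : ∀ x : E, (∀ r ∈ maximalIdeal R ^ n, r • x = 0) → ψ x = a • x
    · obtain ⟨d, hd, hdx⟩ := exists_mem_pow_smul_eq hE hess
        (n := n) (ψ := ψ - LinearMap.lsmul R E a) fun x hx ↦ by simp [h x hx]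
      refine ⟨a + d, fun _ ↦ ⟨by simpa using hd, fun x hx ↦ ?_⟩⟩
      rw [add_smul, ← hdx x hx]
      simp
    · exact ⟨0, fun h' ↦ absurd h' h⟩
  choose F hF using step
  let a : ℕ → R := fun n ↦ Nat.rec 0 F n
  have ha : ∀ n, ∀ x : E, (∀ r ∈ maximalIdeal R ^ n, r • x = 0) → ψ x = a n • x := by
    intro n
    induction n with
    | zero =>
      intro x hx
      have : x = 0 := by simpa using hx 1 (by simp)
      simp [this]
    | succ n ih => exact (hF n (a n) ih).2
  have hmod : ∀ {k l : ℕ}, k ≤ l →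
      a k ≡ a l [SMOD (maximalIdeal R ^ k • ⊤ : Submodule R R)] := by
    intro k l hkl
    induction l, hkl using Nat.le_induction with
    | base => rfl
    | succ l hkl ih =>
      refine ih.trans (SModEq.symm (SModEq.sub_mem.mpr ?_))
      simpa using Ideal.pow_le_pow_right hkl (hF l (a l) (ha l)).1
  obtain ⟨L, hL⟩ := IsPrecomplete.prec' a hmod
  refine ⟨L, fun x ↦ ?_⟩
  obtain ⟨n, hn⟩ := exists_pow_smul_eq_zero hess x
  rw [ha n x hn, ← sub_eq_zero, ← sub_smul]
  exact hn _ (by simpa using SModEq.sub_mem.mp (hL n))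

/-- Over a noetherian local ring, an injective module containing the residue field all of whose
endomorphisms are homotheties is artinian. -/
theorem isArtinian [IsNoetherianRing R]
    (hE : Module.Baer R E) {e : (R ⧸ maximalIdeal R) →ₗ[R] E} (he : Function.Injective e)
    (hend : ∀ ψ : E →ₗ[R] E, ∃ a : R, ∀ x, ψ x = a • x) : IsArtinian R E := by
  have hanti : ∀ S T : Submodule R E, S.annihilator ≤ T.annihilator → T ≤ S := by
    intro S T h x hx
    by_contra hxS
    obtain ⟨φ, hS, hφ⟩ := hE.exists_le_ker_apply_ne_zero he hxS
    obtain ⟨a, ha⟩ := hend φ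
    have haS : a ∈ S.annihilator := Submodule.mem_annihilator.mpr fun y hy ↦ by
      rw [← ha]
      exact hS hy
    exact hφ (by rw [ha, Submodule.mem_annihilator.mp (h haS) x hx])
  have hwf : WellFounded ((· > ·) : Ideal R → Ideal R → Prop) := wellFounded_gt
  refine ⟨Subrelation.wf (r := InvImage (· > ·) Submodule.annihilator) (fun {S T} h ↦ ?_)
    (InvImage.wf _ hwf)⟩
  exact lt_of_le_not_ge (Submodule.annihilator_mono h.le) fun h' ↦ h.not_ge (hanti _ _ h')

end IsLocalRing

/-- If every endomorphism of `E` is a homothety, then every functional on a finite power of `E` is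
a linear combination of the coordinates. -/
lemma exists_forall_apply_eq_sum_smul
    (hend : ∀ ψ : E →ₗ[R] E, ∃ a : R, ∀ x, ψ x = a • x) {ι : Type*} [Fintype ι]
    (g : (ι → E) →ₗ[R] E) :
    ∃ a : ι → R, ∀ x, g x = ∑ i, a i • x i := by
  classical
  choose a ha using fun i ↦ hend (g ∘ₗ LinearMap.single R (fun _ : ι ↦ E) i)
  refine ⟨a, fun x ↦ ?_⟩
  conv_lhs => rw [← LinearMap.sum_single_apply _ x, map_sum]
  exact Finset.sum_congr rfl fun i _ ↦ ha i (x i)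

/-- Restriction of functionals to a generating family is injective. -/
lemma injective_pi_applyₗ {ι : Type*} {s : ι → P} (hs : Submodule.span R (Set.range s) = ⊤) :
    Function.Injective
      (LinearMap.pi fun i ↦ LinearMap.applyₗ (s i) : (P →ₗ[R] E) →ₗ[R] (ι → E)) := by
  refine fun φ φ' h ↦ LinearMap.ext_on_range hs fun i ↦ ?_
  simpa using congrFun h i

/-- The dual of a finite module is artinian. -/
lemma isArtinian_dual_of_finite [Module.Finite R P] [IsArtinian R E] :
    IsArtinian R (P →ₗ[R] E) := by
  obtain ⟨n, s, hs⟩ := Module.Finite.exists_fin (R := R) (M := P)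
  exact isArtinian_of_injective _ (injective_pi_applyₗ hs)

/-- Biduality for finite modules. -/
lemma exists_eval_eq_of_finite [Module.Finite R P] (hE : Module.Baer R E)
    (hend : ∀ ψ : E →ₗ[R] E, ∃ a : R, ∀ x, ψ x = a • x) (ψ : (P →ₗ[R] E) →ₗ[R] E) :
    ∃ x : P, ∀ φ, ψ φ = φ x := by
  obtain ⟨n, s, hs⟩ := Module.Finite.exists_fin (R := R) (M := P)
  obtain ⟨g, rfl⟩ := hE.extension_property _ (injective_pi_applyₗ hs) ψ
  obtain ⟨a, ha⟩ := exists_forall_apply_eq_sum_smul hend g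
  exact ⟨∑ i, a i • s i, fun φ ↦ by simp [ha]⟩

/-- The dual of an artinian module is generated by finitely many functionals. -/
lemma exists_finset_span_eq_top [IsArtinian R P] (hE : Module.Baer R E)
    (hend : ∀ ψ : E →ₗ[R] E, ∃ a : R, ∀ x, ψ x = a • x) :
    ∃ s : Finset (P →ₗ[R] E), Submodule.span R (s : Set (P →ₗ[R] E)) = ⊤ := by
  obtain ⟨s, hs⟩ := Finset.exists_inf_le (fun φ : P →ₗ[R] E ↦ LinearMap.ker φ)
  refine ⟨s, eq_top_iff.mpr fun ψ _ ↦ ?_⟩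
  obtain ⟨g, hg⟩ := hE.exists_comp_eq_of_ker_le (LinearMap.pi fun b : s ↦ (b : P →ₗ[R] E)) ψ
    fun x hx ↦ hs ψ <| (Submodule.mem_finsetInf).mpr fun b hb ↦
      congrFun (LinearMap.mem_ker.mp hx) ⟨b, hb⟩
  obtain ⟨a, ha⟩ := exists_forall_apply_eq_sum_smul hend g
  have : ψ = ∑ b : s, a b • (b : P →ₗ[R] E) := by
    ext x
    simp [← hg, ha]
  rw [this]
  exact Submodule.sum_smul_mem _ _ fun b _ ↦ Submodule.subset_span b.2

/-- Biduality for artinian modules. -/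
lemma exists_eval_eq_of_isArtinian [IsLocalRing R] [IsArtinian R P] (hE : Module.Baer R E)
    {e : (R ⧸ maximalIdeal R) →ₗ[R] E} (he : Function.Injective e)
    (hend : ∀ ψ : E →ₗ[R] E, ∃ a : R, ∀ x, ψ x = a • x) (ψ : (P →ₗ[R] E) →ₗ[R] E) :
    ∃ x : P, ∀ φ, ψ φ = φ x := by
  obtain ⟨s, hs⟩ := exists_finset_span_eq_top (P := P) hE hend
  obtain ⟨x, hx⟩ : (fun b : s ↦ ψ b) ∈
      LinearMap.range (LinearMap.pi fun b : s ↦ (b : P →ₗ[R] E)) := by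
    by_contra hmem
    obtain ⟨g, hker, hne⟩ := hE.exists_le_ker_apply_ne_zero he hmem
    obtain ⟨a, ha⟩ := exists_forall_apply_eq_sum_smul hend g
    have h0 : ∑ b : s, a b • (b : P →ₗ[R] E) = 0 := by
      ext x
      simpa [ha] using LinearMap.mem_ker.mp (hker ⟨x, rfl⟩)
    apply hne
    simpa [ha] using congrArg ψ h0
  refine ⟨x, fun φ ↦ ?_⟩
  have : ψ = LinearMap.applyₗ x :=
    LinearMap.ext_on hs fun b hb ↦ (congrFun hx ⟨b, hb⟩).symm
  rw [this, LinearMap.applyₗ_apply_apply]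

end Matlis

namespace MvPowerSeries

variable {σ K : Type*}

/-- A power series all of whose monomials involve a variable of a given finite set lies in the
ideal generated by the variables. -/
lemma mem_span_X_of_coeff_eq_zero {R : Type*} [CommRing R] (s : Finset σ) (φ : MvPowerSeries σ R)
    (h : ∀ d : σ →₀ ℕ, (∀ i ∈ s, d i = 0) → coeff d φ = 0) :
    φ ∈ Ideal.span (Set.range (X : σ → MvPowerSeries σ R)) := by
  classical
  induction s using Finset.induction_on generalizing φ with
  | empty =>
    rw [show φ = 0 from ext fun d ↦ by simpa using h d]
    exact zero_mem _
  | insert i s _ ih =>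
    let g : MvPowerSeries σ R := fun d ↦ if d i = 0 then 0 else coeff d φ
    have hg : ∀ d, coeff d g = if d i = 0 then 0 else coeff d φ := fun _ ↦ rfl
    obtain ⟨q, hq⟩ : X i ∣ g := X_dvd_iff.mpr fun d hd ↦ by simp [hg, hd]
    rw [← sub_add_cancel φ g]
    refine add_mem (ih _ fun d hd ↦ ?_) ?_
    · by_cases hdi : d i = 0
      · rw [map_sub, hg, if_pos hdi, sub_zero]
        exact h d (by simpa [hdi] using hd)
      · rw [map_sub, hg, if_neg hdi, sub_self]
    · rw [hq]
      exact Ideal.mul_mem_right _ _ (Ideal.subset_span ⟨i, rfl⟩)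

lemma span_range_X_eq_maximalIdeal [Finite σ] [Field K] :
    Ideal.span (Set.range X) = maximalIdeal (MvPowerSeries σ K) := by
  have := Fintype.ofFinite σ
  apply le_antisymm
  · rw [Ideal.span_le]
    rintro _ ⟨i, rfl⟩
    simp [isUnit_iff_constantCoeff]
  · intro φ hφ
    refine mem_span_X_of_coeff_eq_zero Finset.univ φ fun d hd ↦ ?_
    rw [show d = 0 from Finsupp.ext fun i ↦ hd i (Finset.mem_univ i)]
    simpa [isUnit_iff_constantCoeff] using hφ

/-- A local quotient of a power series ring in finitely many variables is complete. -/
lemma isPrecomplete_maximalIdeal_quotient [Finite σ] [Field K] (I : Ideal (MvPowerSeries σ K))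
    [IsLocalRing (MvPowerSeries σ K ⧸ I)] :
    IsPrecomplete (maximalIdeal (MvPowerSeries σ K ⧸ I)) (MvPowerSeries σ K ⧸ I) := by
  rw [← map_maximalIdeal_of_surjective _ (Ideal.Quotient.mk_surjective (I := I)),
    ← span_range_X_eq_maximalIdeal, ← Ideal.Quotient.algebraMap_eq,
    IsPrecomplete.map_algebraMap_iff, ← AdicCompletion.of_surjective_iff]
  intro y
  obtain ⟨y, rfl⟩ := AdicCompletion.map_surjective _ I.mkQ_surjective y
  obtain ⟨x, rfl⟩ := AdicCompletion.of_surjective _ _ y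
  exact ⟨I.mkQ x, (AdicCompletion.map_of _ _ _).symm⟩

end MvPowerSeries


/-- Matlis duality.  Let `K` be a field and
`A = K[[t₁,…,tₙ]]/I` a quotient of a formal power series ring (a complete
noetherian local ring), `m` its maximal ideal, and `E` an injective hull of `A/m`
(an injective module containing `A/m` as an essential submodule).
Then `M ↦ Hom_A(M, E)` is an anti-equivalence between finitely generated
`A`-modules and artinian `A`-modules: it sends finitely generated modules to
artinian ones and vice versa, and the natural biduality map is an isomorphism. -/
theorem stmt_5 (K : Type) [Field K] (n : ℕ) (I : Ideal (MvPowerSeries (Fin n) K))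
    [IsLocalRing (MvPowerSeries (Fin n) K ⧸ I)]
    [IsNoetherianRing (MvPowerSeries (Fin n) K ⧸ I)]
    (E : Type) [AddCommGroup E] [Module (MvPowerSeries (Fin n) K ⧸ I) E]
    -- `E` is injective:
    (hInj : Module.Injective (MvPowerSeries (Fin n) K ⧸ I) E)
    -- `E` contains `A/m` as an essential submodule (so it is an injective hull of `A/m`):
    (f : ((MvPowerSeries (Fin n) K ⧸ I) ⧸
            IsLocalRing.maximalIdeal (MvPowerSeries (Fin n) K ⧸ I))
          →ₗ[MvPowerSeries (Fin n) K ⧸ I] E)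
    (hf : Function.Injective f)
    (hess : ∀ N : Submodule (MvPowerSeries (Fin n) K ⧸ I) E, N ≠ ⊥ →
      ∃ y : E, y ≠ 0 ∧ y ∈ N ∧ y ∈ LinearMap.range f) :
    ∀ (P : Type) [AddCommGroup P] [Module (MvPowerSeries (Fin n) K ⧸ I) P],
      (Module.Finite (MvPowerSeries (Fin n) K ⧸ I) P →
        IsArtinian (MvPowerSeries (Fin n) K ⧸ I)
          (P →ₗ[MvPowerSeries (Fin n) K ⧸ I] E) ∧
        (∀ ψ : (P →ₗ[MvPowerSeries (Fin n) K ⧸ I] E)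
              →ₗ[MvPowerSeries (Fin n) K ⧸ I] E,
          ∃ x : P, ∀ φ, ψ φ = φ x) ∧
        (∀ x y : P, (∀ φ : P →ₗ[MvPowerSeries (Fin n) K ⧸ I] E, φ x = φ y) → x = y)) ∧
      (IsArtinian (MvPowerSeries (Fin n) K ⧸ I) P →
        Module.Finite (MvPowerSeries (Fin n) K ⧸ I)
          (P →ₗ[MvPowerSeries (Fin n) K ⧸ I] E) ∧
        (∀ ψ : (P →ₗ[MvPowerSeries (Fin n) K ⧸ I] E)
              →ₗ[MvPowerSeries (Fin n) K ⧸ I] E,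
          ∃ x : P, ∀ φ, ψ φ = φ x) ∧
        (∀ x y : P, (∀ φ : P →ₗ[MvPowerSeries (Fin n) K ⧸ I] E, φ x = φ y) → x = y)) := by
  have hE : Module.Baer (MvPowerSeries (Fin n) K ⧸ I) E := Module.Baer.of_injective hInj
  have := MvPowerSeries.isPrecomplete_maximalIdeal_quotient I
  have hend := Matlis.exists_forall_apply_eq_smul hE hess
  have hart := Matlis.isArtinian hE hf hend
  intro P _ _
  have hsep : ∀ x y : P,
      (∀ φ : P →ₗ[MvPowerSeries (Fin n) K ⧸ I] E, φ x = φ y) → x = y := by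
    intro x y h
    by_contra hxy
    obtain ⟨φ, hφ⟩ := hE.exists_apply_ne_zero hf (sub_ne_zero.mpr hxy)
    exact hφ (by rw [map_sub, h, sub_self])
  refine ⟨fun _ ↦ ⟨Matlis.isArtinian_dual_of_finite, Matlis.exists_eval_eq_of_finite hE hend,
    hsep⟩, fun _ ↦ ⟨?_, Matlis.exists_eval_eq_of_isArtinian hE hf hend, hsep⟩⟩
  exact ⟨Matlis.exists_finset_span_eq_top hE hend⟩
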